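/- Let S be a proper convex subset of the chambers of a hyperplane arrangement 𝓗 in general position in ℝ^d. Assume |S| = Σ_{i=0}^d C(k,i) for some real k ≥ d−1, where C(k,i) denotes the generalized binomial coefficient k(k−1)⋯(k−i+1)/i!. Then |∂S| ≥ Σ_{i=0}^{d−1} C(k,i). -/

import Mathlib

open Set Topology

noncomputable section

/-- A hyperplane arrangement of `n` affine hyperplanes in `ℝ^d`, given by
nonzero normal vectors and offsets: the `i`-th hyperplane is
`{x | ∑ j, normal i j * x j = offset i}`. -/
structure Arrangement (d n : ℕ) where
  normal : Fin n → (Fin d → ℝ)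
  offset : Fin n → ℝ
  normal_ne : ∀ i, normal i ≠ 0

/-- The thickening (regular open hull) `T_S` of a set `S` of chambers. -/
def thickening {d : ℕ} (S : Set (Set (Fin d → ℝ))) : Set (Fin d → ℝ) :=
  interior (closure (⋃ C ∈ S, C))

/-- The set of connected components of a subset `X` of a topological space. -/
def connComps {α : Type*} [TopologicalSpace α] (X : Set α) : Set (Set α) :=
  {c | ∃ x ∈ X, c = connectedComponentIn X x}

namespace Arrangement

variable {d n : ℕ} (𝓗 : Arrangement d n)

/-- The `i`-th hyperplane of the arrangement. -/
def H (i : Fin n) : Set (Fin d → ℝ) := {x | ∑ j, 𝓗.normal i j * x j = 𝓗.offset i}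

/-- The positive open half-space determined by the `i`-th hyperplane. -/
def pos (i : Fin n) : Set (Fin d → ℝ) := {x | 𝓗.offset i < ∑ j, 𝓗.normal i j * x j}

/-- The negative open half-space determined by the `i`-th hyperplane. -/
def neg (i : Fin n) : Set (Fin d → ℝ) := {x | ∑ j, 𝓗.normal i j * x j < 𝓗.offset i}

/-- The complement of the union of the hyperplanes. -/
def free : Set (Fin d → ℝ) := {x | ∀ i, x ∉ 𝓗.H i}

/-- The chambers: connected components of the complement of the hyperplanes. -/
def chambers : Set (Set (Fin d → ℝ)) :=
  {C | ∃ x ∈ 𝓗.free, C = connectedComponentIn 𝓗.free x}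

/-- General position: the normals of any `≤ d` hyperplanes are linearly independent
(so that their intersection is an affine subspace of the right dimension), and no
`d+1` hyperplanes have a common point. -/
def GeneralPosition : Prop :=
  (∀ A : Finset (Fin n), A.card ≤ d →
      LinearIndependent ℝ (fun i : A => 𝓗.normal i.1)) ∧
  (∀ A : Finset (Fin n), A.card = d + 1 → (⋂ i ∈ A, 𝓗.H i) = ∅)

/-- Hyperplane `e` separates `C` from `C'`. -/
def Separates (e : Fin n) (C C' : Set (Fin d → ℝ)) : Prop :=
  (C ⊆ 𝓗.pos e ∧ C' ⊆ 𝓗.neg e) ∨ (C ⊆ 𝓗.neg e ∧ C' ⊆ 𝓗.pos e)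

/-- Adjacency in the chamber graph: two chambers are adjacent iff they are separated
by exactly one hyperplane (equivalently, share a common facet). -/
def Adj (C C' : Set (Fin d → ℝ)) : Prop :=
  C ∈ 𝓗.chambers ∧ C' ∈ 𝓗.chambers ∧ ∃! e : Fin n, 𝓗.Separates e C C'

/-- The edge boundary of a set `S` of chambers, encoded as the set of ordered pairs
`(C, C')` of adjacent chambers with `C ∈ S` and `C' ∉ S` (each boundary edge is thus
counted exactly once). -/
def edgeBoundary (S : Set (Set (Fin d → ℝ))) :
    Set ((Set (Fin d → ℝ)) × (Set (Fin d → ℝ))) :=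
  {q | q.1 ∈ S ∧ q.2 ∉ S ∧ 𝓗.Adj q.1 q.2}

/-- The stratum `T_S(A) = T_S ∩ L_A`. -/
def stratum (S : Set (Set (Fin d → ℝ))) (A : Finset (Fin n)) : Set (Fin d → ℝ) :=
  thickening S ∩ ⋂ i ∈ A, 𝓗.H i

/-- The support of `S`: those `A` with nonempty stratum. -/
def supp (S : Set (Set (Fin d → ℝ))) : Set (Finset (Fin n)) :=
  {A | (𝓗.stratum S A).Nonempty}

/-- `H_f` bounds the stratum `T_S(A)`: the stratum lies entirely in one of the open
half-spaces of `H_f`, and `H_f` meets the closure of the stratum within `L_A`. -/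
def Bounds (f : Fin n) (S : Set (Set (Fin d → ℝ))) (A : Finset (Fin n)) : Prop :=
  (𝓗.stratum S A ⊆ 𝓗.pos f ∨ 𝓗.stratum S A ⊆ 𝓗.neg f) ∧
  (𝓗.H f ∩ closure (𝓗.stratum S A) ∩ ⋂ i ∈ A, 𝓗.H i).Nonempty

/-- `S` is strata-connected if every nonempty stratum is connected. -/
def StrataConnected (S : Set (Set (Fin d → ℝ))) : Prop :=
  ∀ A ∈ 𝓗.supp S, IsConnected (𝓗.stratum S A)

end Arrangement

/-- The generalized binomial coefficient `C(x, i) = x(x-1)⋯(x-i+1)/i!`. -/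
noncomputable def gchoose (x : ℝ) (i : ℕ) : ℝ :=
  (∏ j ∈ Finset.range i, (x - j)) / (Nat.factorial i)

/-!
Record a chamber by the set of hyperplanes having it on their positive side. By convexity of `T_S`,
each `A` shattered by the resulting family has `T_S ∩ L_A ≠ ∅`, so the shattered sets form a
simplicial complex of dimension less than `d`, and by Pajor's lemma it has at least `|S|` faces.

Let `A` be such a face with `|A| < d`. Since `S` is proper, `T_S ∩ L_A` is not all of `L_A`, and
general position yields a frontier point of it lying on exactly one further hyperplane `H_f`. Near
that point one sees a cube of `2 ^ |A|` boundary edges across `H_f`, that is, `A` is strongly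
shattered by the boundary edges crossing `H_f`. A family strongly shatters at most as many sets as
it has members, so summing over `f` bounds the number of faces of size less than `d` by `|∂S|`.

It remains to bound face numbers: Lovász's form of the Kruskal–Katona theorem, by Keevash's double
counting over links, shows that `C(k, d)` faces of size `d` force `C(k, i)` faces of each size
`i ≤ d`.
-/

section GeneralizedBinomial

theorem gchoose_zero (x : ℝ) : gchoose x 0 = 1 := by simp [gchoose]

theorem gchoose_nonneg {x : ℝ} {i : ℕ} (hx : (i : ℝ) - 1 ≤ x) : 0 ≤ gchoose x i := by
  refine div_nonneg (Finset.prod_nonneg fun j hj => ?_) (Nat.cast_nonneg _)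
  have : (j : ℝ) + 1 ≤ i := by exact_mod_cast Finset.mem_range.1 hj
  linarith

theorem succ_mul_gchoose_succ (x : ℝ) (r : ℕ) :
    (r + 1) * gchoose x (r + 1) = (x - r) * gchoose x r := by
  have h : (r : ℝ) + 1 ≠ 0 := by positivity
  simp only [gchoose, Finset.prod_range_succ, Nat.factorial_succ, Nat.cast_mul, Nat.cast_succ]
  field_simp

theorem succ_mul_gchoose_succ' (x : ℝ) (r : ℕ) :
    (r + 1) * gchoose x (r + 1) = x * gchoose (x - 1) r := by
  have h : (r : ℝ) + 1 ≠ 0 := by positivity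
  have hprod : ∏ j ∈ Finset.range r, (x - (j + 1)) = ∏ j ∈ Finset.range r, (x - 1 - j) :=
    Finset.prod_congr rfl fun j _ => by ring
  simp only [gchoose, Finset.prod_range_succ', Nat.factorial_succ, Nat.cast_mul, Nat.cast_succ,
    Nat.cast_zero, sub_zero, hprod]
  field_simp

end GeneralizedBinomial

section SetFamilies

open Finset
open scoped FinsetFamily

variable {α : Type*}

theorem card_filter_card_lt (𝒜 : Finset (Finset α)) (m : ℕ) :
    #{s ∈ 𝒜 | #s < m} = ∑ i ∈ range m, #(𝒜 # i) := by
  rw [card_eq_sum_card_fiberwise (f := card) (t := range m) fun s hs => by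
    simpa using (mem_filter.1 hs).2]
  refine sum_congr rfl fun i hi => congrArg card ?_
  ext s
  simp only [mem_filter, mem_slice]
  grind

variable {𝒜 : Finset (Finset α)} {r : ℕ}

section DecidableEq

variable [DecidableEq α]

theorem sum_card_memberSubfamily {U : Finset α} (hU : ∀ s ∈ 𝒜, s ⊆ U) :
    ∑ v ∈ U, #(𝒜.memberSubfamily v) = ∑ s ∈ 𝒜, #s := by
  have hcard (v : α) : #(𝒜.memberSubfamily v) = #(𝒜.filter (v ∈ ·)) :=
    card_image_of_injOn ((erase_injOn' v).mono fun _ => by simp)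
  calc ∑ v ∈ U, #(𝒜.memberSubfamily v) = ∑ v ∈ U, #(𝒜.filter (v ∈ ·)) :=
        sum_congr rfl fun v _ => hcard v
    _ = ∑ s ∈ 𝒜, #(U.filter (· ∈ s)) :=
        sum_card_bipartiteAbove_eq_sum_card_bipartiteBelow (fun v s => v ∈ s)
    _ = ∑ s ∈ 𝒜, #s :=
        sum_congr rfl fun s hs => by rw [filter_mem_eq_inter, Finset.inter_eq_right.2 (hU s hs)]

theorem sized_memberSubfamily (h𝒜 : (𝒜 : Set (Finset α)).Sized (r + 1)) (v : α) :
    (𝒜.memberSubfamily v : Set (Finset α)).Sized r := by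
  intro s hs
  obtain ⟨hs, hv⟩ := mem_memberSubfamily.1 (mem_coe.1 hs)
  simpa [card_insert_of_notMem hv] using h𝒜 hs

theorem shadow_memberSubfamily_subset (v : α) :
    ∂ (𝒜.memberSubfamily v) ⊆ (∂ 𝒜).memberSubfamily v := by
  intro s hs
  obtain ⟨a, ha, hs⟩ := mem_shadow_iff_insert_mem.1 hs
  obtain ⟨hs, hv⟩ := mem_memberSubfamily.1 hs
  have hva : v ≠ a := fun h => hv (h ▸ mem_insert_self _ _)
  refine mem_memberSubfamily.2 ⟨mem_shadow_iff_insert_mem.2 ⟨a, ?_, ?_⟩, ?_⟩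
  · simp [ha, hva.symm]
  · rwa [Finset.insert_comm]
  · exact fun h => hv (mem_insert_of_mem h)

theorem memberSubfamily_subset_nonMemberSubfamily_shadow (v : α) :
    𝒜.memberSubfamily v ⊆ (∂ 𝒜).nonMemberSubfamily v := by
  intro s hs
  obtain ⟨hs, hv⟩ := mem_memberSubfamily.1 hs
  exact mem_nonMemberSubfamily.2 ⟨mem_shadow_iff_insert_mem.2 ⟨v, hv, hs⟩, hv⟩

theorem card_memberSubfamily_add_card_memberSubfamily_shadow_le (v : α) :
    #(𝒜.memberSubfamily v) + #((∂ 𝒜).memberSubfamily v) ≤ #(∂ 𝒜) := by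
  have := card_memberSubfamily_add_card_nonMemberSubfamily v (∂ 𝒜)
  have := Finset.card_le_card (memberSubfamily_subset_nonMemberSubfamily_shadow (𝒜 := 𝒜) v)
  omega

theorem sum_card_memberSubfamily_of_sized {U : Finset α} (hU : ∀ s ∈ 𝒜, s ⊆ U)
    (h𝒜 : (𝒜 : Set (Finset α)).Sized r) :
    ∑ v ∈ U, (#(𝒜.memberSubfamily v) : ℝ) = #𝒜 * r := by
  have h : ∑ s ∈ 𝒜, #s = #𝒜 * r := sum_const_nat fun s hs => h𝒜 hs
  exact_mod_cast (sum_card_memberSubfamily hU).trans h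

theorem succ_mul_card_memberSubfamily_le {x : ℝ} (hx : (r : ℝ) + 1 ≤ x)
    (ih : ∀ {ℬ : Finset (Finset α)}, (ℬ : Set (Finset α)).Sized (r + 1) →
      (#(∂ ℬ) : ℝ) < gchoose (x - 1) r → (r + 1) * (#ℬ : ℝ) ≤ (x - 1 - r) * #(∂ ℬ))
    (h𝒜 : (𝒜 : Set (Finset α)).Sized (r + 2)) (hlt : (#(∂ 𝒜) : ℝ) < gchoose x (r + 1)) (v : α) :
    (r + 1) * (#(𝒜.memberSubfamily v) : ℝ) ≤ (x - 1 - r) * #((∂ 𝒜).memberSubfamily v) := by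
  have hshadow : (#(∂ (𝒜.memberSubfamily v)) : ℝ) ≤ #((∂ 𝒜).memberSubfamily v) := by
    exact_mod_cast Finset.card_le_card (shadow_memberSubfamily_subset v)
  rcases lt_or_ge (#((∂ 𝒜).memberSubfamily v) : ℝ) (gchoose (x - 1) r) with h | h
  · calc (r + 1) * (#(𝒜.memberSubfamily v) : ℝ)
        ≤ (x - 1 - r) * #(∂ (𝒜.memberSubfamily v)) :=
          ih (sized_memberSubfamily h𝒜 v) (hshadow.trans_lt h)
      _ ≤ (x - 1 - r) * #((∂ 𝒜).memberSubfamily v) := by gcongr; linarith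
  · have hsum : (#(𝒜.memberSubfamily v) : ℝ) + #((∂ 𝒜).memberSubfamily v) ≤ #(∂ 𝒜) := by
      exact_mod_cast card_memberSubfamily_add_card_memberSubfamily_shadow_le v
    have hx0 : 0 ≤ x := (by positivity : (0 : ℝ) ≤ r + 1).trans hx
    have hle := calc (r + 1) * ((#(𝒜.memberSubfamily v) : ℝ) + #((∂ 𝒜).memberSubfamily v))
          ≤ (r + 1) * gchoose x (r + 1) := by gcongr; exact hsum.trans hlt.le
        _ = x * gchoose (x - 1) r := succ_mul_gchoose_succ' x r
        _ ≤ x * #((∂ 𝒜).memberSubfamily v) := by gcongr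
    linear_combination hle

theorem succ_mul_card_le_of_card_shadow_lt {x : ℝ} (hx : (r : ℝ) ≤ x)
    (h𝒜 : (𝒜 : Set (Finset α)).Sized (r + 1)) (hlt : (#(∂ 𝒜) : ℝ) < gchoose x r) :
    (r + 1) * (#𝒜 : ℝ) ≤ (x - r) * #(∂ 𝒜) := by
  induction r generalizing x 𝒜 with
  | zero =>
    have hempty : #(∂ 𝒜) = 0 := by
      rw [gchoose_zero] at hlt
      exact_mod_cast Nat.lt_one_iff.1 (by exact_mod_cast hlt)
    have : 𝒜 = ∅ := by
      refine eq_empty_of_forall_notMem fun s hs => ?_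
      obtain ⟨a, rfl⟩ := card_eq_one.1 (h𝒜 hs)
      exact (card_pos.2 ⟨_, erase_mem_shadow hs (mem_singleton_self a)⟩).ne' hempty
    simp [this]
  | succ r ih =>
    push_cast at hx ⊢
    have hlink := succ_mul_card_memberSubfamily_le hx
      (fun hℬ hℬlt => ih (by linarith) hℬ hℬlt) h𝒜 hlt
    have hU : ∀ s ∈ 𝒜, s ⊆ 𝒜.sup id := fun s hs => le_sup (f := id) hs
    have hU' : ∀ s ∈ ∂ 𝒜, s ⊆ 𝒜.sup id := fun s hs =>
      let ⟨t, ht, hst⟩ := exists_subset_of_mem_shadow hs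
      hst.trans (hU t ht)
    have hsum := sum_le_sum fun v (_ : v ∈ 𝒜.sup id) => hlink v
    rw [← mul_sum, ← mul_sum, sum_card_memberSubfamily_of_sized hU h𝒜,
      sum_card_memberSubfamily_of_sized hU' h𝒜.shadow] at hsum
    push_cast at hsum
    have hpos : (0 : ℝ) < r + 1 := by positivity
    refine le_of_mul_le_mul_left ?_ hpos
    linear_combination hsum

theorem gchoose_le_card_shadow {x : ℝ} (hx : (r : ℝ) ≤ x)
    (h𝒜 : (𝒜 : Set (Finset α)).Sized (r + 1)) (hne : 𝒜.Nonempty)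
    (hcard : gchoose x (r + 1) ≤ #𝒜) : gchoose x r ≤ #(∂ 𝒜) := by
  by_contra! hlt
  have hle := succ_mul_card_le_of_card_shadow_lt hx h𝒜 hlt
  have hr : (0 : ℝ) < r + 1 := by positivity
  rcases hx.eq_or_lt with rfl | hx
  · have hpos : (0 : ℝ) < #𝒜 := by exact_mod_cast hne.card_pos
    linarith [mul_pos hr hpos]
  · exact absurd hle <| not_le.2 <| calc
      (x - r) * (#(∂ 𝒜) : ℝ) < (x - r) * gchoose x r :=
        mul_lt_mul_of_pos_left hlt (sub_pos.2 hx)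
      _ = (r + 1) * gchoose x (r + 1) := (succ_mul_gchoose_succ x r).symm
      _ ≤ (r + 1) * #𝒜 := by gcongr

theorem shadow_slice_subset (h𝒜 : IsLowerSet (𝒜 : Set (Finset α))) :
    ∂ (𝒜 # (r + 1)) ⊆ 𝒜 # r := by
  intro s hs
  have hcard := (sized_slice (𝒜 := 𝒜)).shadow (mem_coe.2 hs)
  obtain ⟨t, ht, hst⟩ := exists_subset_of_mem_shadow hs
  exact mem_slice.2 ⟨h𝒜 hst (mem_slice.1 ht).1, hcard⟩

end DecidableEq

theorem gchoose_le_card_slice {d i : ℕ} {k : ℝ} (h𝒜 : IsLowerSet (𝒜 : Set (Finset α)))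
    (hk : (d : ℝ) - 1 ≤ k) (hne : (𝒜 # d).Nonempty) (hd : gchoose k d ≤ #(𝒜 # d)) (hi : i ≤ d) :
    gchoose k i ≤ #(𝒜 # i) := by
  classical
  suffices (𝒜 # i).Nonempty ∧ gchoose k i ≤ #(𝒜 # i) from this.2
  induction hi using Nat.decreasingInduction with
  | self => exact ⟨hne, hd⟩
  | of_succ i hi ih =>
    obtain ⟨⟨s, hs⟩, hcard⟩ := ih
    have hik : (i : ℝ) ≤ k := by
      have : (i : ℝ) + 1 ≤ d := by exact_mod_cast hi
      linarith
    obtain ⟨a, ha⟩ : s.Nonempty := card_pos.1 ((mem_slice.1 hs).2 ▸ i.succ_pos)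
    have hsub := shadow_slice_subset (r := i) h𝒜
    refine ⟨⟨_, hsub (erase_mem_shadow hs ha)⟩, ?_⟩
    exact (gchoose_le_card_shadow hik sized_slice ⟨s, hs⟩ hcard).trans
      (by exact_mod_cast Finset.card_le_card hsub)

theorem sum_gchoose_le_card_filter_card_lt {d : ℕ} {k : ℝ}
    (h𝒜 : IsLowerSet (𝒜 : Set (Finset α))) (hk : (d : ℝ) - 1 ≤ k) (hsize : ∀ s ∈ 𝒜, #s ≤ d)
    (hcard : ∑ i ∈ range (d + 1), gchoose k i ≤ #𝒜) :
    ∑ i ∈ range d, gchoose k i ≤ #{s ∈ 𝒜 | #s < d} := by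
  have hsplit : #𝒜 = #{s ∈ 𝒜 | #s < d} + #(𝒜 # d) := by
    rw [card_filter_card_lt, ← sum_range_succ, ← card_filter_card_lt,
      filter_true_of_mem fun s hs => Nat.lt_succ_of_le (hsize s hs)]
  rw [sum_range_succ, hsplit] at hcard
  push_cast at hcard
  rcases le_or_gt (#(𝒜 # d) : ℝ) (gchoose k d) with hle | hlt
  · linarith
  have hne : (𝒜 # d).Nonempty :=
    card_pos.1 (by exact_mod_cast (gchoose_nonneg hk).trans_lt hlt)
  rw [card_filter_card_lt]
  push_cast
  exact sum_le_sum fun i hi => gchoose_le_card_slice h𝒜 hk hne hlt.le (mem_range.1 hi).le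

/-- `𝒜` strongly shatters (order-shatters) `A` if it contains a whole translate `{B ∪ X | X ⊆ A}`
of the cube on `A`, with the trace `B` outside `A` the same for all its members. -/
def StronglyShatters [DecidableEq α] (𝒜 : Finset (Finset α)) (A : Finset α) : Prop :=
  ∃ B, Disjoint A B ∧ ∀ X ⊆ A, B ∪ X ∈ 𝒜

theorem card_le_card_of_stronglyShatters [DecidableEq α] [Finite α] {𝒢 : Finset (Finset α)}
    (h : ∀ A ∈ 𝒢, StronglyShatters 𝒜 A) : #𝒢 ≤ #𝒜 := by
  have := Fintype.ofFinite α
  -- A cube on `A` inside `𝒜` prevents the complementary family from shattering `Aᶜ`.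
  have hdisj : Disjoint (𝒢.image compl) 𝒜ᶜ.shatterer := by
    rw [Finset.disjoint_left]
    rintro _ hcompl hshatter
    obtain ⟨A, hA, rfl⟩ := mem_image.1 hcompl
    obtain ⟨B, hAB, hcube⟩ := h A hA
    obtain ⟨D, hD, hDB⟩ := mem_shatterer.1 hshatter hAB.symm.le_compl_right
    have hsplit : B ∪ D ∩ A = D := by rw [← hDB]; grind [Finset.mem_compl]
    exact mem_compl.1 hD (hsplit ▸ hcube (D ∩ A) inter_subset_right)
  have hcard := card_le_univ (𝒢.image compl ∪ 𝒜ᶜ.shatterer)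
  rw [card_union_of_disjoint hdisj, Finset.card_image_of_injective _ compl_injective] at hcard
  have := card_le_card_shatterer 𝒜ᶜ
  have := card_compl_add_card 𝒜
  omega

end SetFamilies

section AffineFunctions

open AffineMap

variable {E ι : Type*} [AddCommGroup E] [Module ℝ E]

theorem exists_mem_segment_eq_zero (g : E →ᵃ[ℝ] ℝ) {x y : E} (hx : 0 ≤ g x) (hy : g y ≤ 0) :
    ∃ z ∈ segment ℝ x y, g z = 0 := by
  have h : (0 : ℝ) ∈ g '' segment ℝ x y := by
    rw [image_segment, segment_eq_uIcc, uIcc_of_ge (hy.trans hx)]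
    exact ⟨hy, hx⟩
  exact h

theorem exists_mem_forall_eq_zero {T : Set E} (hT : Convex ℝ T) (g : ι → E →ᵃ[ℝ] ℝ)
    (A : Finset ι)
    (h : ∀ X ⊆ A, ∃ x ∈ T, (∀ i ∈ X, 0 ≤ g i x) ∧ ∀ i ∈ A, i ∉ X → g i x ≤ 0) :
    ∃ x ∈ T, ∀ i ∈ A, g i x = 0 := by
  classical
  induction A using Finset.induction_on generalizing T with
  | empty => simpa using h ∅ subset_rfl
  | insert a A ha ih =>
    have hconvex : Convex ℝ (T ∩ g a ⁻¹' {0}) := hT.inter ((convex_singleton 0).affine_preimage _)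
    obtain ⟨x, ⟨hxT, hxa⟩, hx⟩ := ih hconvex fun X hX => by
      have haX : a ∉ X := fun h => ha (hX h)
      obtain ⟨x, hxT, hxX, hxA⟩ := h (insert a X) (Finset.insert_subset_insert a hX)
      obtain ⟨y, hyT, hyX, hyA⟩ := h X (hX.trans (Finset.subset_insert a A))
      obtain ⟨z, hz, hza⟩ := exists_mem_segment_eq_zero (g a)
        (hxX a (Finset.mem_insert_self a X)) (hyA a (Finset.mem_insert_self a A) haX)
      refine ⟨z, ⟨hT.segment_subset hxT hyT hz, hza⟩, fun i hi => ?_, fun i hi hiX => ?_⟩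
      · exact ((convex_Ici 0).affine_preimage (g i)).segment_subset
          (hxX i (Finset.mem_insert_of_mem hi)) (hyX i hi) hz
      · have hix : i ∉ insert a X := by grind
        exact ((convex_Iic 0).affine_preimage (g i)).segment_subset
          (hxA i (Finset.mem_insert_of_mem hi) hix) (hyA i (Finset.mem_insert_of_mem hi) hiX) hz
    exact ⟨x, hxT, (Finset.forall_mem_insert ..).2 ⟨hxa, hx⟩⟩

variable [TopologicalSpace E] [IsTopologicalAddGroup E] [ContinuousSMul ℝ E]

theorem tendsto_lineMap_nhds (x y : E) (t : ℝ) :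
    Filter.Tendsto (lineMap x y : ℝ → E) (𝓝 t) (𝓝 (lineMap x y t)) :=
  lineMap_continuous.tendsto t

theorem subset_closure_setOf_forall_ne_zero (L : AffineSubspace ℝ E) (g : ι → E →ᵃ[ℝ] ℝ)
    (s : Finset ι) (hg : ∀ i ∈ s, ∃ z ∈ L, g i z ≠ 0) :
    (L : Set E) ⊆ closure {z | z ∈ L ∧ ∀ i ∈ s, g i z ≠ 0} := by
  classical
  induction s using Finset.induction_on with
  | empty => simpa using subset_closure
  | insert a s _ ih =>
    refine (ih fun i hi => hg i (Finset.mem_insert_of_mem hi)).trans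
      (closure_minimal (fun u ⟨huL, hu⟩ => ?_) isClosed_closure)
    obtain ⟨w, hwL, hw⟩ := hg a (Finset.mem_insert_self a s)
    by_cases hua : g a u = 0
    · have htend : Filter.Tendsto (lineMap u w : ℝ → E) (𝓝[≠] 0) (𝓝 u) := by
        simpa using (tendsto_lineMap_nhds u w 0).mono_left nhdsWithin_le_nhds
      have hne : ∀ᶠ t in 𝓝[≠] (0 : ℝ), ∀ i ∈ s, g i (lineMap u w t) ≠ 0 := by
        refine (Finset.eventually_all s).2 fun i hi => Filter.Eventually.filter_mono
          nhdsWithin_le_nhds ?_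
        simp only [apply_lineMap]
        exact (tendsto_lineMap_nhds (g i u) (g i w) 0).eventually_ne (by simpa using hu i hi)
      refine mem_closure_of_tendsto htend ?_
      filter_upwards [hne, self_mem_nhdsWithin] with t ht ht0
      refine ⟨lineMap_mem t huL hwL, (Finset.forall_mem_insert ..).2 ⟨?_, ht⟩⟩
      rw [apply_lineMap, hua]
      simpa [lineMap_apply_module] using ⟨ht0, hw⟩
    · exact subset_closure ⟨huL, (Finset.forall_mem_insert ..).2 ⟨hua, hu⟩⟩

theorem lineMap_mem_of_mem_closure {T : Set E} (hT : Convex ℝ T) (hTo : IsOpen T) {x p : E}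
    (hx : x ∈ T) (hp : p ∈ closure T) {t : ℝ} (ht0 : 0 < t) (ht1 : t < 1) :
    lineMap x p t ∈ T := by
  have h := hT.openSegment_interior_closure_subset_interior (hTo.interior_eq.symm ▸ hx) hp
  exact interior_subset (h (lineMap_mem_openSegment ℝ x p ⟨ht0, ht1⟩))

theorem lineMap_notMem_closure_of_mem_frontier {T : Set E} (hT : Convex ℝ T) (hTo : IsOpen T)
    {x p : E} (hx : x ∈ T) (hp : p ∈ frontier T) {t : ℝ} (ht : 1 < t) :
    lineMap x p t ∉ closure T := by
  intro hmem
  refine (hTo.frontier_eq ▸ hp).2 ?_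
  have h := lineMap_mem_of_mem_closure hT hTo hx hmem (inv_pos.2 (one_pos.trans ht))
    (inv_lt_one_of_one_lt₀ ht)
  rwa [lineMap_lineMap_right, inv_mul_cancel₀ (one_pos.trans ht).ne', lineMap_apply_one] at h

theorem exists_mem_segment_mem_frontier {T : Set E} (hTo : IsOpen T) {x y : E} (hx : x ∈ T)
    (hy : y ∉ closure T) : ∃ p ∈ segment ℝ x y, p ∈ frontier T := by
  by_contra! hfrontier
  have hcover : segment ℝ x y ⊆ T ∪ (closure T)ᶜ := fun p hp =>
    or_iff_not_imp_left.2 fun hpT hpc => hfrontier p hp (hTo.frontier_eq ▸ ⟨hpc, hpT⟩)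
  obtain ⟨p, -, hpT, hpc⟩ := (convex_segment x y).isPreconnected T (closure T)ᶜ hTo
    isClosed_closure.isOpen_compl hcover ⟨x, left_mem_segment ℝ x y, hx⟩
    ⟨y, right_mem_segment ℝ x y, hy⟩
  exact hpc (subset_closure hpT)

end AffineFunctions

theorem mulVec_surjective_of_linearIndependent_row {m n K : Type*} [Finite m] [Fintype n] [Field K]
    {M : Matrix m n K} (hM : LinearIndependent K M.row) : Function.Surjective M.mulVec := by
  have := Fintype.ofFinite m
  have hrank : Module.finrank K (LinearMap.range M.mulVecLin) = Module.finrank K (m → K) := by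
    rw [Module.finrank_fintype_fun_eq_card]
    exact hM.rank_matrix
  exact LinearMap.range_eq_top.1 (Submodule.eq_top_of_finrank_eq hrank)

theorem sign_coe_signType (s : SignType) : SignType.sign (s : ℝ) = s := by
  cases s <;> simp

namespace Arrangement

open AffineMap

variable {d n : ℕ} {𝓗 : Arrangement d n} {x y p : Fin d → ℝ} {A : Finset (Fin n)} {f i : Fin n}

section SignVectors

variable (𝓗) in
/-- The affine function whose zero set is the `i`-th hyperplane. -/
def form (i : Fin n) : (Fin d → ℝ) →ᵃ[ℝ] ℝ :=
  (dotProductBilin ℝ ℝ (𝓗.normal i)).toAffineMap - const ℝ _ (𝓗.offset i)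

variable (𝓗) in
/-- The sign vector (covector) of a point: on which side of, or whether on, each hyperplane it
lies. -/
def signVec (x : Fin d → ℝ) (i : Fin n) : SignType := SignType.sign (𝓗.form i x)

variable (𝓗) in
/-- The relatively open face of the arrangement containing `x`. -/
def face (x : Fin d → ℝ) : Set (Fin d → ℝ) := {y | 𝓗.signVec y = 𝓗.signVec x}

variable (𝓗) in
/-- The intersection of the hyperplanes with index in `A`; the paper's `L_A`. -/
def flat (A : Finset (Fin n)) : AffineSubspace ℝ (Fin d → ℝ) where
  carrier := {x | ∀ i ∈ A, 𝓗.form i x = 0}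
  smul_vsub_vadd_mem' c p q r hp hq hr i hi := by
    rw [AffineMap.map_vadd, LinearMap.map_smul, linearMap_vsub, hp i hi, hq i hi, hr i hi]
    simp

variable (𝓗) in
/-- `T` is a union of faces of the arrangement, that is, of fibres of the sign vector. -/
def IsUnionOfFaces (T : Set (Fin d → ℝ)) : Prop :=
  ∀ ⦃u v⦄, 𝓗.signVec u = 𝓗.signVec v → u ∈ T → v ∈ T

theorem form_apply : 𝓗.form i x = ∑ j, 𝓗.normal i j * x j - 𝓗.offset i := rfl

theorem continuous_form : Continuous (𝓗.form i) := (𝓗.form i).continuous_of_finiteDimensional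

theorem mem_flat : x ∈ 𝓗.flat A ↔ ∀ i ∈ A, 𝓗.form i x = 0 := Iff.rfl

theorem signVec_eq_zero_iff : 𝓗.signVec x i = 0 ↔ 𝓗.form i x = 0 := sign_eq_zero_iff

theorem mem_H_iff : x ∈ 𝓗.H i ↔ 𝓗.form i x = 0 := sub_eq_zero.symm

theorem mem_free_iff : x ∈ 𝓗.free ↔ ∀ i, 𝓗.signVec x i ≠ 0 :=
  forall_congr' fun _ => not_congr (mem_H_iff.trans signVec_eq_zero_iff.symm)

theorem mem_pos_iff : x ∈ 𝓗.pos i ↔ 𝓗.signVec x i = 1 := by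
  rw [signVec, sign_eq_one_iff, form_apply, sub_pos, pos, mem_ofPred_eq]

theorem mem_neg_iff : x ∈ 𝓗.neg i ↔ 𝓗.signVec x i = -1 := by
  rw [signVec, sign_eq_neg_one_iff, form_apply, sub_neg, neg, mem_ofPred_eq]

theorem mem_face_self (x : Fin d → ℝ) : x ∈ 𝓗.face x := rfl

theorem face_eq_face_iff : 𝓗.face x = 𝓗.face y ↔ 𝓗.signVec x = 𝓗.signVec y :=
  ⟨fun h => (h ▸ mem_face_self x : x ∈ 𝓗.face y), fun h => by simp only [face, h]⟩

theorem eventually_signVec_eq (x : Fin d → ℝ) :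
    ∀ᶠ y in 𝓝 x, ∀ i, 𝓗.signVec x i ≠ 0 → 𝓗.signVec y i = 𝓗.signVec x i := by
  refine Filter.eventually_all.2 fun i => ?_
  by_cases hi : 𝓗.signVec x i = 0
  · simp [hi]
  have hcont : ContinuousAt (fun y => 𝓗.signVec y i) x :=
    (continuousAt_sign_of_ne_zero (signVec_eq_zero_iff.not.1 hi)).comp continuous_form.continuousAt
  filter_upwards [hcont.eventually (isOpen_discrete {𝓗.signVec x i} |>.mem_nhds rfl)] with y hy _
  exact hy

theorem convex_face (x : Fin d → ℝ) : Convex ℝ (𝓗.face x) := by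
  have h : 𝓗.face x = ⋂ i, 𝓗.form i ⁻¹' (SignType.sign ⁻¹' {𝓗.signVec x i}) := by
    ext y
    simp [face, funext_iff, signVec]
  rw [h]
  exact convex_iInter fun i =>
    (ordConnected_singleton.preimage_mono SignType.sign.monotone).convex.affine_preimage _

theorem face_subset_free (hx : x ∈ 𝓗.free) : 𝓗.face x ⊆ 𝓗.free :=
  fun _ hy => mem_free_iff.2 fun i => congrFun hy i ▸ mem_free_iff.1 hx i

theorem face_mem_nhds (hx : x ∈ 𝓗.free) : 𝓗.face x ∈ 𝓝 x :=
  (eventually_signVec_eq x).mono fun _ hy => funext fun i => hy i (mem_free_iff.1 hx i)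

theorem connectedComponentIn_free (hx : x ∈ 𝓗.free) :
    connectedComponentIn 𝓗.free x = 𝓗.face x := by
  refine Subset.antisymm (fun y hy => funext fun i => ?_) <|
    (convex_face x).isPreconnected.subset_connectedComponentIn (mem_face_self x)
      (face_subset_free hx)
  have hcont : ContinuousOn (fun z => 𝓗.signVec z i) 𝓗.free := fun z hz =>
    ((continuousAt_sign_of_ne_zero (signVec_eq_zero_iff.not.1 (mem_free_iff.1 hz i))).comp
      continuous_form.continuousAt).continuousWithinAt
  exact isPreconnected_connectedComponentIn.constant
    (hcont.mono (connectedComponentIn_subset _ _)) hy (mem_connectedComponentIn hx)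

theorem mem_chambers_iff {C : Set (Fin d → ℝ)} : C ∈ 𝓗.chambers ↔ ∃ x ∈ 𝓗.free, C = 𝓗.face x :=
  exists_congr fun _ => and_congr_right fun hx => by rw [connectedComponentIn_free hx]

theorem face_mem_chambers (hx : x ∈ 𝓗.free) : 𝓗.face x ∈ 𝓗.chambers :=
  mem_chambers_iff.2 ⟨x, hx, rfl⟩

theorem exists_form_ne_zero (i : Fin n) : ∃ z, 𝓗.form i z ≠ 0 := by
  by_contra! h
  refine 𝓗.normal_ne i (funext fun j => ?_)
  have h0 := h 0
  have h1 := h (Pi.single j 1)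
  simp only [form_apply, Pi.zero_apply, mul_zero, Finset.sum_const_zero] at h0
  simp only [form_apply, Pi.single_apply, mul_ite, mul_one, mul_zero, Finset.sum_ite_eq',
    Finset.mem_univ, if_true] at h1
  simp only [Pi.zero_apply]
  linarith

theorem dense_free : Dense 𝓗.free := by
  refine fun x => closure_mono (fun z hz => ?_)
    (subset_closure_setOf_forall_ne_zero ⊤ 𝓗.form Finset.univ
      (fun i _ => (exists_form_ne_zero i).imp fun z hz => ⟨trivial, hz⟩) (mem_univ x))
  exact mem_free_iff.2 fun i => signVec_eq_zero_iff.not.2 (hz.2 i (Finset.mem_univ i))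

end SignVectors

section Thickening

variable {S : Set (Set (Fin d → ℝ))}

theorem mem_biUnion_chambers_iff (hS : S ⊆ 𝓗.chambers) :
    x ∈ ⋃ C ∈ S, C ↔ x ∈ 𝓗.free ∧ 𝓗.face x ∈ S := by
  simp only [mem_iUnion, exists_prop]
  refine ⟨fun ⟨C, hC, hx⟩ => ?_, fun h => ⟨_, h.2, mem_face_self x⟩⟩
  obtain ⟨c, hc, rfl⟩ := mem_chambers_iff.1 (hS hC)
  exact ⟨face_subset_free hc hx, face_eq_face_iff.2 hx ▸ hC⟩

theorem mem_thickening_iff (hS : S ⊆ 𝓗.chambers) :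
    p ∈ thickening S ↔ ∀ᶠ z in 𝓝 p, z ∈ 𝓗.free → 𝓗.face z ∈ S := by
  refine ⟨fun hp => ?_, fun hp => mem_interior_iff_mem_nhds.2 ?_⟩
  · filter_upwards [mem_interior_iff_mem_nhds.1 hp] with z hz hfree
    obtain ⟨u, hu, huS⟩ := mem_closure_iff_nhds.1 hz _ (face_mem_nhds hfree)
    exact face_eq_face_iff.2 hu ▸ ((mem_biUnion_chambers_iff hS).1 huS).2
  · filter_upwards [eventually_eventually_nhds.2 hp] with w hw
    refine mem_closure_iff_frequently.2 ?_
    exact ((mem_closure_iff_frequently.1 (dense_free w)).and_eventually hw).mono fun z hz =>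
      (mem_biUnion_chambers_iff hS).2 ⟨hz.1, hz.2 hz.1⟩

theorem face_mem_iff_mem_thickening (hS : S ⊆ 𝓗.chambers) (hx : x ∈ 𝓗.free) :
    𝓗.face x ∈ S ↔ x ∈ thickening S := by
  rw [mem_thickening_iff hS]
  refine ⟨fun h => ?_, fun h => h.self_of_nhds hx⟩
  filter_upwards [face_mem_nhds hx] with z hz _
  rwa [face_eq_face_iff.2 hz]

theorem eventually_signVec_translate (h : 𝓗.signVec x = 𝓗.signVec y) :
    ∀ᶠ z in 𝓝 x, 𝓗.signVec (y + (z - x)) = 𝓗.signVec z := by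
  have htend : Filter.Tendsto (fun z => y + (z - x)) (𝓝 x) (𝓝 y) :=
    Continuous.tendsto' (by fun_prop) _ _ (by simp)
  filter_upwards [eventually_signVec_eq (𝓗 := 𝓗) x,
    htend.eventually (eventually_signVec_eq (𝓗 := 𝓗) y)] with z hzx hzy
  ext1 i
  by_cases hi : 𝓗.signVec x i = 0
  · have hx := signVec_eq_zero_iff.1 hi
    have hy := signVec_eq_zero_iff.1 ((congrFun h i).symm.trans hi)
    have : 𝓗.form i (y + (z - x)) = 𝓗.form i z := by
      rw [form_apply] at hx hy ⊢
      rw [form_apply]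
      simp only [Pi.add_apply, Pi.sub_apply, mul_add, mul_sub, Finset.sum_add_distrib,
        Finset.sum_sub_distrib]
      linarith
    simp only [signVec, this]
  · rw [hzx i hi, hzy i (congrFun h i ▸ hi), congrFun h i]

theorem isUnionOfFaces_thickening (hS : S ⊆ 𝓗.chambers) : 𝓗.IsUnionOfFaces (thickening S) := by
  intro x y h hx
  rw [mem_thickening_iff hS] at hx ⊢
  have htend : Filter.Tendsto (fun z => x + (z - y)) (𝓝 y) (𝓝 x) :=
    Continuous.tendsto' (by fun_prop) _ _ (by simp)
  filter_upwards [htend.eventually hx, eventually_signVec_translate h.symm] with z hz heq hfree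
  rw [← face_eq_face_iff.2 heq]
  exact hz (mem_free_iff.2 fun i => congrFun heq i ▸ mem_free_iff.1 hfree i)

theorem exists_notMem_closure_thickening (hS : S ⊆ 𝓗.chambers) (hproper : S ≠ 𝓗.chambers) :
    ∃ y, y ∉ closure (thickening S) := by
  obtain ⟨C, hC, hCS⟩ := exists_of_ssubset (hS.ssubset_of_ne hproper)
  obtain ⟨y, hy, rfl⟩ := mem_chambers_iff.1 hC
  refine ⟨y, fun hmem => ?_⟩
  obtain ⟨z, hzy, hz⟩ := mem_closure_iff_nhds.1 hmem _ (face_mem_nhds hy)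
  exact hCS ((face_mem_iff_mem_thickening hS hy).2 (isUnionOfFaces_thickening hS hzy hz))

end Thickening

namespace GeneralPosition

theorem exists_form_eq (hgp : 𝓗.GeneralPosition) (hA : A.card ≤ d) (c : Fin n → ℝ) :
    ∃ z, ∀ i ∈ A, 𝓗.form i z = c i := by
  obtain ⟨z, hz⟩ := mulVec_surjective_of_linearIndependent_row
    (M := Matrix.of fun i : A => 𝓗.normal i) (hgp.1 A hA) fun i => c i + 𝓗.offset i
  refine ⟨z, fun i hi => ?_⟩
  rw [form_apply, sub_eq_iff_eq_add]
  exact congrFun hz ⟨i, hi⟩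

theorem card_le_of_mem_flat (hgp : 𝓗.GeneralPosition) (hx : x ∈ 𝓗.flat A) : A.card ≤ d := by
  by_contra! hcard
  obtain ⟨B, hBA, hB⟩ := Finset.exists_subset_card_eq hcard
  have : x ∈ ⋂ i ∈ B, 𝓗.H i := mem_iInter₂.2 fun i hi => mem_H_iff.2 (hx i (hBA hi))
  rwa [hgp.2 B hB] at this

theorem exists_mem_flat_form_ne_zero (hgp : 𝓗.GeneralPosition) (hA : A.card ≤ d) (hi : i ∉ A) :
    ∃ z ∈ 𝓗.flat A, 𝓗.form i z ≠ 0 := by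
  obtain ⟨u, hu⟩ := hgp.exists_form_eq hA 0
  by_contra! hzero
  have hcard : (insert i A).card ≤ d := hgp.card_le_of_mem_flat (x := u) <|
    (Finset.forall_mem_insert ..).2 ⟨hzero u hu, hu⟩
  obtain ⟨z, hz⟩ := hgp.exists_form_eq hcard (Pi.single i 1)
  have hzA : z ∈ 𝓗.flat A := fun j hj => by
    rw [hz j (Finset.mem_insert_of_mem hj), Pi.single_eq_of_ne (ne_of_mem_of_not_mem hj hi)]
  simpa [hz i (Finset.mem_insert_self i A)] using hzero z hzA

theorem frequently_signVec_eq (hgp : 𝓗.GeneralPosition) (x : Fin d → ℝ) (τ : Fin n → SignType) :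
    ∃ᶠ z in 𝓝 x, ∀ i, 𝓗.signVec z i = if 𝓗.signVec x i = 0 then τ i else 𝓗.signVec x i := by
  have hflat : x ∈ 𝓗.flat {i | 𝓗.signVec x i = 0} := fun i hi =>
    signVec_eq_zero_iff.1 (Finset.mem_filter.1 hi).2
  obtain ⟨w, hw⟩ := hgp.exists_form_eq (hgp.card_le_of_mem_flat hflat) fun i => (τ i : ℝ)
  have htend : Filter.Tendsto (lineMap x w : ℝ → _) (𝓝[>] 0) (𝓝 x) := by
    simpa using (tendsto_lineMap_nhds x w 0).mono_left nhdsWithin_le_nhds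
  refine htend.frequently (Filter.Eventually.frequently ?_)
  filter_upwards [htend.eventually (eventually_signVec_eq (𝓗 := 𝓗) x),
    self_mem_nhdsWithin] with t ht ht0 i
  split_ifs with hi
  · have hform : 𝓗.form i (lineMap x w t) = t * τ i := by
      rw [apply_lineMap, signVec_eq_zero_iff.1 hi, hw i (by simpa using hi), lineMap_apply_module]
      simp
    rw [signVec, hform, sign_mul, sign_pos ht0, one_mul, sign_coe_signType]
  · exact ht i hi

end GeneralPosition

section Facets

variable {T : Set (Fin d → ℝ)}

theorem GeneralPosition.exists_mem_form_eq_zero_iff (hgp : 𝓗.GeneralPosition) (hTo : IsOpen T)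
    (hxT : x ∈ T) (hxA : x ∈ 𝓗.flat A) : ∃ z ∈ T, ∀ i, 𝓗.form i z = 0 ↔ i ∈ A := by
  have hx := subset_closure_setOf_forall_ne_zero (𝓗.flat A) 𝓗.form Aᶜ (fun i hi =>
    hgp.exists_mem_flat_form_ne_zero (hgp.card_le_of_mem_flat hxA) (Finset.mem_compl.1 hi)) hxA
  obtain ⟨z, hzT, hzA, hz⟩ := mem_closure_iff_nhds.1 hx T (hTo.mem_nhds hxT)
  exact ⟨z, hzT, fun i =>
    ⟨fun h => by_contra fun hi => hz i (Finset.mem_compl.2 hi) h, hzA i⟩⟩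

-- The inequality keeps the line through `x` and `z` from meeting two further hyperplanes at once.
theorem GeneralPosition.exists_mem_flat_form_mul_ne (hgp : 𝓗.GeneralPosition) (hTo : IsOpen T)
    (hA : A.card < d) (hx : ∀ i, 𝓗.form i x = 0 ↔ i ∈ A) (hyT : y ∈ T) (hyA : y ∈ 𝓗.flat A) :
    ∃ z ∈ T, z ∈ 𝓗.flat A ∧ ∀ i ∉ A, ∀ j ∉ A, i ≠ j →
      𝓗.form i x * 𝓗.form j z ≠ 𝓗.form j x * 𝓗.form i z := by
  let g (q : Fin n × Fin n) : (Fin d → ℝ) →ᵃ[ℝ] ℝ :=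
    𝓗.form q.1 x • 𝓗.form q.2 - 𝓗.form q.2 x • 𝓗.form q.1
  have hg : ∀ q ∈ Aᶜ.offDiag, ∃ z ∈ 𝓗.flat A, g q z ≠ 0 := by
    rintro ⟨i, j⟩ hq
    obtain ⟨hi, hj, hij⟩ := Finset.mem_offDiag.1 hq
    rw [Finset.mem_compl] at hi hj
    obtain ⟨z, hzA, hz⟩ := hgp.exists_mem_flat_form_ne_zero (A := insert i A) (i := j)
      ((Finset.card_insert_le i A).trans hA) (by simp [hij.symm, hj])
    refine ⟨z, fun l hl => hzA l (Finset.mem_insert_of_mem hl), ?_⟩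
    simpa [g, hzA i (Finset.mem_insert_self i A)] using ⟨(hx i).not.2 hi, hz⟩
  obtain ⟨z, hzT, hzA, hz⟩ := mem_closure_iff_nhds.1
    (subset_closure_setOf_forall_ne_zero (𝓗.flat A) g _ hg hyA) T (hTo.mem_nhds hyT)
  exact ⟨z, hzT, hzA, fun i hi j hj hij =>
    sub_ne_zero.1 (hz (i, j) (by simp [hi, hj, hij]))⟩

theorem exists_form_eq_zero_of_mem_frontier (hT : Convex ℝ T) (hTo : IsOpen T)
    (hfaces : 𝓗.IsUnionOfFaces T)
    (hxT : x ∈ T) (hx : x ∈ 𝓗.flat A) (hp : p ∈ frontier T) (hpA : p ∈ 𝓗.flat A) :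
    ∃ i ∉ A, 𝓗.form i p = 0 := by
  by_contra! hne
  rw [hTo.frontier_eq] at hp
  have htend : Filter.Tendsto (lineMap x p : ℝ → _) (𝓝[<] 1) (𝓝 p) := by
    simpa using (tendsto_lineMap_nhds x p 1).mono_left nhdsWithin_le_nhds
  obtain ⟨t, ht, ht0, ht1⟩ := ((htend.eventually (eventually_signVec_eq (𝓗 := 𝓗) p)).and
    (Ioo_mem_nhdsLT one_pos)).exists
  refine hp.2 (hfaces (funext fun i => ?_) (lineMap_mem_of_mem_closure hT hTo hxT hp.1 ht0 ht1))
  by_cases hi : i ∈ A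
  · rw [signVec_eq_zero_iff.2 (hpA i hi), signVec_eq_zero_iff.2 (lineMap_mem t hx hpA i hi)]
  · exact ht i (signVec_eq_zero_iff.not.2 (hne i hi))

theorem GeneralPosition.exists_mem_frontier_form_eq_zero_iff (hgp : 𝓗.GeneralPosition)
    (hT : Convex ℝ T) (hTo : IsOpen T)
    (hfaces : 𝓗.IsUnionOfFaces T) (hA : A.card < d)
    (hxT : x ∈ T) (hxA : x ∈ 𝓗.flat A) (hyT : y ∉ closure T) (hyA : y ∈ 𝓗.flat A) :
    ∃ z ∈ T, ∃ p ∈ frontier T, ∃ f ∉ A,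
      (∀ i, 𝓗.form i z = 0 ↔ i ∈ A) ∧ ∀ i, 𝓗.form i p = 0 ↔ i ∈ insert f A := by
  obtain ⟨z, hzT, hz⟩ := hgp.exists_mem_form_eq_zero_iff hTo hxT hxA
  have hzA : z ∈ 𝓗.flat A := fun i => (hz i).2
  obtain ⟨w, hwT, hwA, hw⟩ :=
    hgp.exists_mem_flat_form_mul_ne isClosed_closure.isOpen_compl hA hz hyT hyA
  obtain ⟨p, hpzw, hp⟩ := exists_mem_segment_mem_frontier hTo hzT hwT
  obtain ⟨t, -, rfl⟩ := segment_eq_image_lineMap ℝ z w ▸ hpzw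
  have hpA : lineMap z w t ∈ 𝓗.flat A := lineMap_mem t hzA hwA
  have ht : t ≠ 0 := by
    rintro rfl
    rw [lineMap_apply_zero] at hp
    exact (hTo.frontier_eq ▸ hp).2 hzT
  obtain ⟨f, hfA, hf⟩ := exists_form_eq_zero_of_mem_frontier hT hTo hfaces hzT hzA hp hpA
  refine ⟨z, hzT, _, hp, f, hfA, hz, fun i => ⟨fun hi => ?_, fun hi => ?_⟩⟩
  · by_contra hmem
    rw [Finset.mem_insert, not_or] at hmem
    refine hw i hmem.2 f hfA hmem.1 (mul_left_cancel₀ ht ?_)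
    rw [apply_lineMap, lineMap_apply_module, smul_eq_mul, smul_eq_mul] at hi hf
    linear_combination 𝓗.form i z * hf - 𝓗.form f z * hi
  · rcases Finset.mem_insert.1 hi with rfl | hi
    exacts [hf, hpA i hi]

end Facets

section Crossing

variable {T : Set (Fin d → ℝ)}

theorem eventually_signVec_lineMap (hx : x ∈ 𝓗.flat A)
    (hp : ∀ i, 𝓗.form i p = 0 ↔ i ∈ insert f A) :
    ∀ᶠ t in 𝓝 (1 : ℝ), 𝓗.signVec (lineMap x p t) =
      Function.update (𝓗.signVec p) f (SignType.sign (1 - t) * 𝓗.signVec x f) := by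
  have htend : Filter.Tendsto (lineMap x p : ℝ → _) (𝓝 1) (𝓝 p) := by
    simpa using tendsto_lineMap_nhds x p 1
  have hpA : p ∈ 𝓗.flat A := fun i hi => (hp i).2 (Finset.mem_insert_of_mem hi)
  filter_upwards [htend.eventually (eventually_signVec_eq (𝓗 := 𝓗) p)] with t ht
  ext1 i
  rcases eq_or_ne i f with rfl | hif
  · have hform : 𝓗.form i (lineMap x p t) = (1 - t) * 𝓗.form i x := by
      rw [apply_lineMap, (hp i).2 (Finset.mem_insert_self i A), lineMap_apply_module]
      simp
    rw [Function.update_self, signVec, hform, sign_mul, signVec]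
  · rw [Function.update_of_ne hif]
    by_cases hi : i ∈ A
    · rw [signVec_eq_zero_iff.2 (hpA i hi), signVec_eq_zero_iff.2 (lineMap_mem t hx hpA i hi)]
    · exact ht i (signVec_eq_zero_iff.not.2 ((hp i).not.2 (by simp [hif, hi])))

theorem exists_mem_signVec_eq_update (hT : Convex ℝ T) (hTo : IsOpen T) (hxT : x ∈ T)
    (hpT : p ∈ frontier T) (hx : x ∈ 𝓗.flat A) (hp : ∀ i, 𝓗.form i p = 0 ↔ i ∈ insert f A) :
    ∃ z ∈ T, 𝓗.signVec z = Function.update (𝓗.signVec p) f (𝓗.signVec x f) := by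
  obtain ⟨t, ht, ht0, ht1⟩ := (((eventually_signVec_lineMap hx hp).filter_mono
    nhdsWithin_le_nhds).and (Ioo_mem_nhdsLT one_pos)).exists
  refine ⟨_, lineMap_mem_of_mem_closure hT hTo hxT (frontier_subset_closure hpT) ht0 ht1, ?_⟩
  rw [ht, sign_pos (sub_pos.2 ht1), one_mul]

theorem exists_notMem_closure_signVec_eq_update (hT : Convex ℝ T) (hTo : IsOpen T) (hxT : x ∈ T)
    (hpT : p ∈ frontier T) (hx : x ∈ 𝓗.flat A) (hp : ∀ i, 𝓗.form i p = 0 ↔ i ∈ insert f A) :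
    ∃ z ∉ closure T, 𝓗.signVec z = Function.update (𝓗.signVec p) f (-𝓗.signVec x f) := by
  obtain ⟨t, ht, ht1⟩ := (((eventually_signVec_lineMap hx hp).filter_mono
    nhdsWithin_le_nhds).and (self_mem_nhdsWithin : Ioi (1 : ℝ) ∈ 𝓝[>] 1)).exists
  refine ⟨_, lineMap_notMem_closure_of_mem_frontier hT hTo hxT hpT ht1, ?_⟩
  rw [ht, sign_neg (sub_neg.2 ht1), neg_one_mul]

theorem exists_mem_signVec_eq_neg (hTo : IsOpen T) (hy : y ∈ T) (hx : 𝓗.signVec x f ≠ 0)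
    (hne : 𝓗.signVec y f ≠ 𝓗.signVec x f) : ∃ z ∈ T, 𝓗.signVec z f = -𝓗.signVec x f := by
  have hcases : ∀ s t : SignType, t ≠ 0 → s ≠ t → s = 0 ∨ s = -t := by decide
  rcases hcases _ _ hx hne with h0 | hneg
  · have htend := tendsto_lineMap_nhds x y 1
    rw [lineMap_apply_one] at htend
    obtain ⟨t, htT, ht1⟩ := (((htend.eventually (hTo.mem_nhds hy)).filter_mono
      nhdsWithin_le_nhds).and (self_mem_nhdsWithin : Ioi (1 : ℝ) ∈ 𝓝[>] 1)).exists
    have hform : 𝓗.form f (lineMap x y t) = (1 - t) * 𝓗.form f x := by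
      rw [apply_lineMap, signVec_eq_zero_iff.1 h0, lineMap_apply_module]
      simp
    exact ⟨_, htT, by rw [signVec, hform, sign_mul, sign_neg (sub_neg.2 ht1), neg_one_mul, signVec]⟩
  · exact ⟨y, hy, hneg⟩

theorem GeneralPosition.exists_forall_mem_signVec_eq (hgp : 𝓗.GeneralPosition) (hd : 0 < d)
    (hT : Convex ℝ T) (hTo : IsOpen T)
    (hfaces : 𝓗.IsUnionOfFaces T)
    (hx : x ∈ T) (hy : y ∉ closure T) : ∃ f, ∃ s ≠ 0, ∀ z ∈ T, 𝓗.signVec z f = s := by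
  obtain ⟨u, huT, p, hpT, f, -, hu, hp⟩ := hgp.exists_mem_frontier_form_eq_zero_iff hT hTo hfaces
    (A := ∅) (by simpa) hx (by simp [mem_flat]) hy (by simp [mem_flat])
  have huf : 𝓗.signVec u f ≠ 0 := signVec_eq_zero_iff.not.2 ((hu f).not.2 (Finset.notMem_empty f))
  -- Leaving `T` through `p` from a point beyond `H_f` leads back to the face of a point of `T`.
  refine ⟨f, 𝓗.signVec u f, huf, fun z hz => by_contra fun hne => ?_⟩
  obtain ⟨w, hwT, hw⟩ := exists_mem_signVec_eq_neg hTo hz huf hne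
  obtain ⟨v, hvT, hv⟩ :=
    exists_mem_signVec_eq_update hT hTo huT hpT (by simp [mem_flat]) hp
  obtain ⟨v', hv'T, hv'⟩ :=
    exists_notMem_closure_signVec_eq_update hT hTo hwT hpT (by simp [mem_flat]) hp
  rw [hw, neg_neg, ← hv] at hv'
  exact hv'T (subset_closure (hfaces hv'.symm hvT))

theorem GeneralPosition.exists_mem_flat_notMem_closure (hgp : 𝓗.GeneralPosition)
    (hT : Convex ℝ T) (hTo : IsOpen T)
    (hfaces : 𝓗.IsUnionOfFaces T) (hA : A.card < d)
    (hxT : x ∈ T) (hxA : x ∈ 𝓗.flat A) (hy : y ∉ closure T) :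
    ∃ z ∈ 𝓗.flat A, z ∉ closure T := by
  obtain ⟨f, s, hs, hf⟩ :=
    hgp.exists_forall_mem_signVec_eq (Nat.zero_lt_of_lt hA) hT hTo hfaces hxT hy
  have hfA : f ∉ A := fun h => hs ((hf x hxT).symm.trans (signVec_eq_zero_iff.2 (hxA f h)))
  obtain ⟨z, hz⟩ := hgp.exists_form_eq ((Finset.card_insert_le f A).trans hA)
    (Pi.single f (-(s : ℝ)))
  have hzf : 𝓗.signVec z f = -s := by
    rw [signVec, hz f (Finset.mem_insert_self f A), Pi.single_eq_same, ← SignType.coe_neg,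
      sign_coe_signType]
  refine ⟨z, fun i hi => ?_, fun hzT => ?_⟩
  · rw [hz i (Finset.mem_insert_of_mem hi), Pi.single_eq_of_ne (ne_of_mem_of_not_mem hi hfA)]
  · obtain ⟨w, hwT, hw⟩ := ((mem_closure_iff_frequently.1 hzT).and_eventually
      (eventually_signVec_eq (𝓗 := 𝓗) z)).exists
    have hwf : 𝓗.signVec w f = -s :=
      (hw f (hzf ▸ SignType.neg_eq_zero_iff.not.2 hs)).trans hzf
    exact hs (SignType.self_eq_neg_iff.1 ((hf w hwT).symm.trans hwf))

end Crossing

section ChamberGraph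

variable {S : Set (Set (Fin d → ℝ))}

theorem face_subset_pos_iff : 𝓗.face x ⊆ 𝓗.pos i ↔ 𝓗.signVec x i = 1 :=
  ⟨fun h => mem_pos_iff.1 (h (mem_face_self x)),
    fun h _ hy => mem_pos_iff.2 ((congrFun hy i).trans h)⟩

theorem face_subset_neg_iff : 𝓗.face x ⊆ 𝓗.neg i ↔ 𝓗.signVec x i = -1 :=
  ⟨fun h => mem_neg_iff.1 (h (mem_face_self x)),
    fun h _ hy => mem_neg_iff.2 ((congrFun hy i).trans h)⟩

theorem separates_face_iff (hx : x ∈ 𝓗.free) (hy : y ∈ 𝓗.free) :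
    𝓗.Separates i (𝓗.face x) (𝓗.face y) ↔ 𝓗.signVec x i ≠ 𝓗.signVec y i := by
  have hsign : ∀ s t : SignType, s ≠ 0 → t ≠ 0 → ((s = 1 ∧ t = -1 ∨ s = -1 ∧ t = 1) ↔ s ≠ t) := by
    decide
  simp only [Separates, face_subset_pos_iff, face_subset_neg_iff]
  exact hsign _ _ (mem_free_iff.1 hx i) (mem_free_iff.1 hy i)

variable (𝓗) in
/-- The hyperplanes having the chamber `C` on their positive side; this encodes the chambers as a
set family on the index set of the arrangement. -/
def positiveSide (C : Set (Fin d → ℝ)) : Finset (Fin n) := (toFinite {i | C ⊆ 𝓗.pos i}).toFinset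

theorem mem_positiveSide_face : i ∈ 𝓗.positiveSide (𝓗.face x) ↔ 𝓗.signVec x i = 1 :=
  (Finite.mem_toFinset _).trans face_subset_pos_iff

variable (𝓗) in
theorem injOn_positiveSide : InjOn 𝓗.positiveSide 𝓗.chambers := by
  intro C hC D hD h
  obtain ⟨x, hx, rfl⟩ := mem_chambers_iff.1 hC
  obtain ⟨y, hy, rfl⟩ := mem_chambers_iff.1 hD
  have hsign : ∀ s t : SignType, s ≠ 0 → t ≠ 0 → (s = 1 ↔ t = 1) → s = t := by decide
  refine face_eq_face_iff.2 (funext fun i =>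
    hsign _ _ (mem_free_iff.1 hx i) (mem_free_iff.1 hy i) ?_)
  rw [← mem_positiveSide_face, ← mem_positiveSide_face, h]

variable (𝓗) in
theorem finite_chambers : 𝓗.chambers.Finite :=
  Finite.of_finite_image (toFinite _) 𝓗.injOn_positiveSide

variable (𝓗) in
/-- The set family on the index set of the arrangement encoding the set `S` of chambers. -/
def chamberFamily (S : Set (Set (Fin d → ℝ))) : Finset (Finset (Fin n)) :=
  (toFinite (𝓗.positiveSide '' S)).toFinset

theorem card_chamberFamily (hS : S ⊆ 𝓗.chambers) : (𝓗.chamberFamily S).card = S.ncard := by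
  rw [chamberFamily, ← ncard_eq_toFinset_card, (𝓗.injOn_positiveSide.mono hS).ncard_image]

variable (𝓗) in
/-- The set family on the index set of the arrangement encoding the boundary edges of `S` which
cross the hyperplane `f`, each edge being recorded by the side of its two ends with respect to the
other hyperplanes. -/
def crossingFamily (S : Set (Set (Fin d → ℝ))) (f : Fin n) : Finset (Finset (Fin n)) :=
  (toFinite ((fun q => (𝓗.positiveSide q.1).erase f) ''
    {q ∈ 𝓗.edgeBoundary S | 𝓗.Separates f q.1 q.2})).toFinset

theorem finite_edgeBoundary (S : Set (Set (Fin d → ℝ))) : (𝓗.edgeBoundary S).Finite :=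
  (𝓗.finite_chambers.prod 𝓗.finite_chambers).subset fun _ hq => ⟨hq.2.2.1, hq.2.2.2.1⟩

theorem sum_card_crossingFamily_le (S : Set (Set (Fin d → ℝ))) :
    ∑ f, (𝓗.crossingFamily S f).card ≤ (𝓗.edgeBoundary S).ncard := by
  classical
  set E := (finite_edgeBoundary (𝓗 := 𝓗) S).toFinset
  have hmem (q) : q ∈ E ↔ q ∈ 𝓗.edgeBoundary S := Finite.mem_toFinset _
  let crosses (f : Fin n) (q : Set (Fin d → ℝ) × Set (Fin d → ℝ)) : Prop := 𝓗.Separates f q.1 q.2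
  calc ∑ f, (𝓗.crossingFamily S f).card
      ≤ ∑ f, (E.filter (crosses f)).card := by
        refine Finset.sum_le_sum fun f _ => ?_
        refine (Finset.card_le_card fun s hs => ?_).trans
          (Finset.card_image_le (f := fun q => (𝓗.positiveSide q.1).erase f))
        obtain ⟨q, hq, rfl⟩ := (Finite.mem_toFinset _).1 hs
        exact Finset.mem_image_of_mem _ (Finset.mem_filter.2 ⟨(hmem q).2 hq.1, hq.2⟩)
    _ = ∑ q ∈ E, (Finset.univ.filter fun f => crosses f q).card :=
        Finset.sum_card_bipartiteAbove_eq_sum_card_bipartiteBelow crosses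
    _ = ∑ q ∈ E, 1 := Finset.sum_congr rfl fun q hq => by
        obtain ⟨f, hf, huniq⟩ := ((hmem q).1 hq).2.2.2.2
        exact Finset.card_eq_one.2 ⟨f, by ext i; simpa [crosses] using ⟨huniq i, fun h => h ▸ hf⟩⟩
    _ = (𝓗.edgeBoundary S).ncard := by
        rw [← Finset.card_eq_sum_ones, ncard_eq_toFinset_card _ (finite_edgeBoundary S)]

theorem exists_mem_thickening_inter_flat (hS : S ⊆ 𝓗.chambers) (hconv : Convex ℝ (thickening S))
    (hA : (𝓗.chamberFamily S).Shatters A) : ∃ x ∈ thickening S, x ∈ 𝓗.flat A := by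
  refine exists_mem_forall_eq_zero hconv 𝓗.form A fun X hX => ?_
  obtain ⟨u, hu, rfl⟩ := hA hX
  obtain ⟨C, hC, rfl⟩ := (Finite.mem_toFinset _).1 hu
  obtain ⟨x, hx, rfl⟩ := mem_chambers_iff.1 (hS hC)
  refine ⟨x, (face_mem_iff_mem_thickening hS hx).1 hC, fun i hi => ?_, fun i hi hiX => ?_⟩
  · exact (sign_eq_one_iff.1 (mem_positiveSide_face.1 (Finset.mem_inter.1 hi).2)).le
  · exact not_lt.1 fun hpos => hiX
      (Finset.mem_inter.2 ⟨hi, mem_positiveSide_face.2 (sign_eq_one_iff.2 hpos)⟩)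

theorem erase_positiveSide_mem_crossingFamily (hS : S ⊆ 𝓗.chambers) (hx : x ∈ 𝓗.free)
    (hxS : x ∈ thickening S) (hyS : y ∉ thickening S)
    (hxy : 𝓗.signVec y = Function.update (𝓗.signVec x) f (-𝓗.signVec x f)) :
    (𝓗.positiveSide (𝓗.face x)).erase f ∈ 𝓗.crossingFamily S f := by
  have hxf := mem_free_iff.1 hx f
  have hy : y ∈ 𝓗.free := mem_free_iff.2 fun i => by
    rcases eq_or_ne i f with rfl | hif
    · simpa [hxy] using hxf
    · simpa [hxy, hif] using mem_free_iff.1 hx i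
  have hsep (i) : 𝓗.Separates i (𝓗.face x) (𝓗.face y) ↔ i = f := by
    rw [separates_face_iff hx hy, hxy]
    rcases eq_or_ne i f with rfl | hif
    · simpa using hxf
    · simp [hif]
  exact (Finite.mem_toFinset _).2 ⟨(𝓗.face x, 𝓗.face y),
    ⟨⟨(face_mem_iff_mem_thickening hS hx).2 hxS, (face_mem_iff_mem_thickening hS hy).not.2 hyS,
      face_mem_chambers hx, face_mem_chambers hy, f, (hsep f).2 rfl, fun i => (hsep i).1⟩,
      (hsep f).2 rfl⟩, rfl⟩

theorem GeneralPosition.exists_erase_positiveSide_mem_crossingFamily (hgp : 𝓗.GeneralPosition)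
    (hS : S ⊆ 𝓗.chambers) {s : SignType} (hs : s ≠ 0)
    (hxS : x ∈ thickening S) (hyS : y ∉ closure (thickening S))
    (hx : 𝓗.signVec x = Function.update (𝓗.signVec p) f s)
    (hy : 𝓗.signVec y = Function.update (𝓗.signVec p) f (-s))
    {τ : Fin n → SignType} (hτ : ∀ i, τ i ≠ 0) :
    ∃ z, (∀ i ≠ f, 𝓗.signVec z i = if 𝓗.signVec p i = 0 then τ i else 𝓗.signVec p i) ∧
      (𝓗.positiveSide (𝓗.face z)).erase f ∈ 𝓗.crossingFamily S f := by
  have hopen : IsOpen (thickening S) := isOpen_interior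
  obtain ⟨z, hz, hzS⟩ := ((hgp.frequently_signVec_eq x τ).and_eventually
    (hopen.mem_nhds hxS)).exists
  obtain ⟨w, hw, hwS⟩ := ((hgp.frequently_signVec_eq y τ).and_eventually
    (isClosed_closure.isOpen_compl.mem_nhds hyS)).exists
  have hzi : ∀ i ≠ f, 𝓗.signVec z i = if 𝓗.signVec p i = 0 then τ i else 𝓗.signVec p i :=
    fun i hi => by simp only [hz, hx, Function.update_of_ne hi]
  have hwz : 𝓗.signVec w = Function.update (𝓗.signVec z) f (-𝓗.signVec z f) := by
    ext1 i
    rcases eq_or_ne i f with rfl | hif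
    · simp [hw, hy, hz, hx, hs]
    · simp [hw, hy, hzi i hif, hif]
  have hfree : z ∈ 𝓗.free := mem_free_iff.2 fun i => by
    rw [hz]
    split_ifs with h
    exacts [hτ i, h]
  exact ⟨z, hzi, erase_positiveSide_mem_crossingFamily hS hfree hzS
    (fun h => hwS (subset_closure h)) hwz⟩

theorem GeneralPosition.stronglyShatters_crossingFamily_of_signVec_eq (hgp : 𝓗.GeneralPosition)
    (hS : S ⊆ 𝓗.chambers) (hfA : f ∉ A) (hp : ∀ i, 𝓗.signVec p i = 0 ↔ i ∈ insert f A)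
    {s : SignType} (hs : s ≠ 0) (hxS : x ∈ thickening S) (hyS : y ∉ closure (thickening S))
    (hx : 𝓗.signVec x = Function.update (𝓗.signVec p) f s)
    (hy : 𝓗.signVec y = Function.update (𝓗.signVec p) f (-s)) :
    StronglyShatters (𝓗.crossingFamily S f) A := by
  have hpA {i} (hi : i ∈ insert f A) : 𝓗.signVec p i = 0 := (hp i).2 hi
  refine ⟨Finset.univ.filter fun i => 𝓗.signVec p i = 1, ?_, fun X hX => ?_⟩
  · refine Finset.disjoint_left.2 fun i hiA hi => ?_
    simp [hpA (Finset.mem_insert_of_mem hiA)] at hi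
  obtain ⟨z, hz, hmem⟩ := hgp.exists_erase_positiveSide_mem_crossingFamily hS hs hxS hyS hx hy
    (τ := fun i => if i ∈ X then 1 else -1) fun i => by split_ifs <;> decide
  convert hmem using 1
  ext i
  rw [Finset.mem_erase, mem_positiveSide_face]
  rcases eq_or_ne i f with rfl | hif
  · have hiX : i ∉ X := fun h => hfA (hX h)
    simp [hpA (Finset.mem_insert_self i A), hiX]
  by_cases hiA : i ∈ A
  · simp [hz i hif, hpA (Finset.mem_insert_of_mem hiA), hif]
  · have hiX : i ∉ X := fun h => hiA (hX h)
    have hpi : 𝓗.signVec p i ≠ 0 := (hp i).not.2 (by simp [hif, hiA])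
    simp [hz i hif, hpi, hif, hiX]

theorem GeneralPosition.exists_stronglyShatters_crossingFamily (hgp : 𝓗.GeneralPosition)
    (hS : S ⊆ 𝓗.chambers) (hproper : S ≠ 𝓗.chambers) (hconv : Convex ℝ (thickening S))
    (hA : (𝓗.chamberFamily S).Shatters A) (hcard : A.card < d) :
    ∃ f, StronglyShatters (𝓗.crossingFamily S f) A := by
  have hfaces := isUnionOfFaces_thickening hS
  have hopen : IsOpen (thickening S) := isOpen_interior
  obtain ⟨x, hxS, hxA⟩ := exists_mem_thickening_inter_flat hS hconv hA
  obtain ⟨y, hyS⟩ := exists_notMem_closure_thickening hS hproper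
  obtain ⟨z, hzA, hzS⟩ := hgp.exists_mem_flat_notMem_closure hconv hopen hfaces hcard hxS hxA hyS
  obtain ⟨u, huS, p, hpS, f, hfA, hu, hp⟩ :=
    hgp.exists_mem_frontier_form_eq_zero_iff hconv hopen hfaces hcard hxS hxA hzS hzA
  have huA : u ∈ 𝓗.flat A := fun i => (hu i).2
  obtain ⟨v, hvS, hv⟩ := exists_mem_signVec_eq_update hconv hopen huS hpS huA hp
  obtain ⟨w, hwS, hw⟩ := exists_notMem_closure_signVec_eq_update hconv hopen huS hpS huA hp
  exact ⟨f, hgp.stronglyShatters_crossingFamily_of_signVec_eq hS hfA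
    (fun i => signVec_eq_zero_iff.trans (hp i)) (signVec_eq_zero_iff.not.2 ((hu f).not.2 hfA))
    hvS hwS hv hw⟩

theorem GeneralPosition.card_filter_card_lt_shatterer_le (hgp : 𝓗.GeneralPosition)
    (hS : S ⊆ 𝓗.chambers) (hproper : S ≠ 𝓗.chambers) (hconv : Convex ℝ (thickening S)) :
    ((𝓗.chamberFamily S).shatterer.filter fun A => A.card < d).card ≤
      (𝓗.edgeBoundary S).ncard := by
  classical
  set 𝒢 := (𝓗.chamberFamily S).shatterer.filter fun A => A.card < d
  have hcover : 𝒢 ⊆ Finset.univ.biUnion fun f =>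
      𝒢.filter (StronglyShatters (𝓗.crossingFamily S f)) := fun A hA => by
    obtain ⟨hshatters, hcard⟩ := Finset.mem_filter.1 hA
    obtain ⟨f, hf⟩ := hgp.exists_stronglyShatters_crossingFamily hS hproper hconv
      (Finset.mem_shatterer.1 hshatters) hcard
    exact Finset.mem_biUnion.2 ⟨f, Finset.mem_univ f, Finset.mem_filter.2 ⟨hA, hf⟩⟩
  calc 𝒢.card ≤ ∑ f, (𝒢.filter (StronglyShatters (𝓗.crossingFamily S f))).card :=
        (Finset.card_le_card hcover).trans Finset.card_biUnion_le
    _ ≤ ∑ f, (𝓗.crossingFamily S f).card := Finset.sum_le_sum fun f _ =>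
        card_le_card_of_stronglyShatters fun A hA => (Finset.mem_filter.1 hA).2
    _ ≤ (𝓗.edgeBoundary S).ncard := sum_card_crossingFamily_le S

end ChamberGraph

end Arrangement

theorem stmt6_general {d n : ℕ} (𝓗 : Arrangement d n) (hgp : 𝓗.GeneralPosition)
    (S : Set (Set (Fin d → ℝ))) (hS : S ⊆ 𝓗.chambers)
    (hproper : S ≠ 𝓗.chambers)
    (hconv : Convex ℝ (thickening S))
    (k : ℝ) (hk : (d : ℝ) - 1 ≤ k)
    (hcard : ∑ i ∈ Finset.range (d + 1), gchoose k i ≤ (S.ncard : ℝ)) :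
    ∑ i ∈ Finset.range d, gchoose k i ≤ ((𝓗.edgeBoundary S).ncard : ℝ) := by
  set K := (𝓗.chamberFamily S).shatterer
  have hdim : ∀ A ∈ K, A.card ≤ d := fun A hA =>
    let ⟨_, _, hx⟩ := Arrangement.exists_mem_thickening_inter_flat hS hconv
      (Finset.mem_shatterer.1 hA)
    hgp.card_le_of_mem_flat hx
  have hcardK : (S.ncard : ℝ) ≤ K.card := by
    exact_mod_cast (Arrangement.card_chamberFamily hS).ge.trans (Finset.card_le_card_shatterer _)
  calc ∑ i ∈ Finset.range d, gchoose k i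
      ≤ (K.filter fun A => A.card < d).card :=
        sum_gchoose_le_card_filter_card_lt (Finset.isLowerSet_shatterer _) hk hdim
          (hcard.trans hcardK)
    _ ≤ (𝓗.edgeBoundary S).ncard := by
        exact_mod_cast hgp.card_filter_card_lt_shatterer_le hS hproper hconv

/-- A proper convex subset `S` of the chambers of an arrangement in
general position in `ℝ^d`, with `|S| = ∑_{i=0}^d C(k,i)` for some real `k ≥ d-1`,
satisfies `|∂S| ≥ ∑_{i=0}^{d-1} C(k,i)`. -/
theorem stmt6 {d n : ℕ} (𝓗 : Arrangement d n) (hgp : 𝓗.GeneralPosition)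
    (S : Set (Set (Fin d → ℝ))) (hS : S ⊆ 𝓗.chambers)
    (hproper : S ≠ 𝓗.chambers)
    (hconv : Convex ℝ (thickening S))
    (k : ℝ) (hk : (d : ℝ) - 1 ≤ k)
    (hcard : (S.ncard : ℝ) = ∑ i ∈ Finset.range (d + 1), gchoose k i) :
    (∑ i ∈ Finset.range d, gchoose k i) ≤ ((𝓗.edgeBoundary S).ncard : ℝ) := by
  exact stmt6_general 𝓗 hgp S hS hproper hconv k hk hcard.ge
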